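/- Suppose u : (0,b) → E is differentiable on (0,b) and the function v(x) = x^α u'(x) (the degenerate first derivative u^[1]) is itself differentiable on (0,b). Then ũ = u∘ψ is twice differentiable on (0,b̃), and for every τ ∈ (0,b̃) one has ũ''(τ) = ψ(τ)^α · v'(ψ(τ)), i.e. the second-order degenerate derivative u^[2](x) = (x^α d/dx)² u(x) is transformed by the substitution into the ordinary second derivative d²ũ/dτ². -/

import Mathlib

open MeasureTheory Set

/-- The inverse substitution `ψ(τ) = ((1-α)τ)^(1/(1-α))`. -/
noncomputable def psi (α : ℝ) (τ : ℝ) : ℝ := ((1 - α) * τ) ^ (1 / (1 - α))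

/-- The transformed endpoint `b̃ = b^(1-α)/(1-α)`. -/
noncomputable def btil (α b : ℝ) : ℝ := b ^ (1 - α) / (1 - α)

theorem psi_pos {α τ : ℝ} (hτ : 0 < (1 - α) * τ) : 0 < psi α τ :=
  Real.rpow_pos_of_pos hτ _

theorem psi_lt_iff_lt_btil {α b τ : ℝ} (hb : 0 < b) (hτ : 0 < (1 - α) * τ) :
    psi α τ < b ↔ τ < btil α b := by
  rw [psi, btil, one_div]
  rcases (left_ne_zero_of_mul hτ.ne').lt_or_gt with hneg | hpos
  · rw [Real.rpow_inv_lt_iff_of_neg hτ hb hneg, lt_div_iff_of_neg' hneg]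
  · rw [Real.rpow_inv_lt_iff_of_pos hτ.le hb.le hpos, lt_div_iff₀' hpos]

theorem psi_rpow {α τ : ℝ} (hτ : 0 < (1 - α) * τ) :
    psi α τ ^ α = ((1 - α) * τ) ^ (1 / (1 - α) - 1) := by
  have hα : 1 - α ≠ 0 := left_ne_zero_of_mul hτ.ne'
  have exponent_eq : 1 / (1 - α) * α = 1 / (1 - α) - 1 := by
    field_simp
    ring
  rw [psi, ← Real.rpow_mul hτ.le, exponent_eq]

theorem hasDerivAt_psi {α τ : ℝ} (hτ : 0 < (1 - α) * τ) :
    HasDerivAt (psi α) (psi α τ ^ α) τ := by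
  have hα : 1 - α ≠ 0 := left_ne_zero_of_mul hτ.ne'
  have hpow := (hasDerivAt_const_mul (x := τ) (1 - α)).rpow_const (p := 1 / (1 - α))
    (Or.inl hτ.ne')
  rwa [mul_one_div_cancel hα, one_mul, ← psi_rpow hτ] at hpow

section

variable {E : Type*} [NormedAddCommGroup E] [NormedSpace ℝ E] {α τ : ℝ}

theorem hasDerivAt_comp_psi {f : ℝ → E} {f' : E} (hτ : 0 < (1 - α) * τ)
    (hf : HasDerivAt f f' (psi α τ)) :
    HasDerivAt (fun t => f (psi α t)) (psi α τ ^ α • f') τ :=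
  hf.scomp τ (hasDerivAt_psi hτ)

/-- The condition `0 < (1 - α) * τ` selects the half-line on which `ψ` inverts
`φ(x) = x ^ (1 - α) / (1 - α)`: it is `τ > 0` for `α < 1` and `τ < 0` for `α > 1`. In the latter
case `ψ` maps `(-∞, b̃)` onto `(0, b)`. -/
theorem hasDerivAt_second_comp_psi_general {b : ℝ} (hb : 0 < b) {u u' v' : ℝ → E}
    (hu : ∀ x ∈ Ioo 0 b, HasDerivAt u (u' x) x)
    (hv : ∀ x ∈ Ioo 0 b, HasDerivAt (fun y => y ^ α • u' y) (v' x) x)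
    (hτ : 0 < (1 - α) * τ) (hτb : τ < btil α b) :
    HasDerivAt (fun t => u (psi α t)) (psi α τ ^ α • u' (psi α τ)) τ ∧
      HasDerivAt (fun t => psi α t ^ α • u' (psi α t)) (psi α τ ^ α • v' (psi α τ)) τ := by
  have hψ : psi α τ ∈ Ioo 0 b := ⟨psi_pos hτ, (psi_lt_iff_lt_btil hb hτ).2 hτb⟩
  exact ⟨hasDerivAt_comp_psi hτ (hu _ hψ), hasDerivAt_comp_psi hτ (hv _ hψ)⟩

end

/-- Suppose `u : (0,b) → E` is differentiable on `(0,b)` (with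
derivative `u'`) and the degenerate first derivative `v(x) = x^α • u'(x)` is itself
differentiable on `(0,b)` (with derivative `v'`).  Then `ũ = u ∘ ψ` is twice
differentiable on `(0, b̃)`: its first derivative is `τ ↦ ψ(τ)^α • u'(ψ(τ))` (i.e.
`v ∘ ψ`), and for every `τ ∈ (0, b̃)` one has `ũ''(τ) = ψ(τ)^α • v'(ψ(τ))`; that is,
the second-order degenerate derivative `u^[2] = (x^α d/dx)² u` is transformed into the
ordinary second derivative `d²ũ/dτ²`. -/
theorem hasDerivAt_second_comp_psi
    {E : Type*} [NormedAddCommGroup E] [NormedSpace ℝ E]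
    (α b : ℝ) (hα0 : 0 ≤ α) (hα1 : α < 1) (hb : 0 < b)
    (u : ℝ → E) (u' v' : ℝ → E)
    (hu : ∀ x ∈ Ioo 0 b, HasDerivAt u (u' x) x)
    (hv : ∀ x ∈ Ioo 0 b, HasDerivAt (fun y => y ^ α • u' y) (v' x) x) :
    ∀ τ ∈ Ioo 0 (btil α b),
      HasDerivAt (fun t => u (psi α t)) ((psi α τ) ^ α • u' (psi α τ)) τ ∧
      HasDerivAt (fun t => (psi α t) ^ α • u' (psi α t))
        ((psi α τ) ^ α • v' (psi α τ)) τ := by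
  intro τ hτ
  exact hasDerivAt_second_comp_psi_general hb hu hv
    (mul_pos (sub_pos.2 hα1) hτ.1) hτ.2
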